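/- Critical gauge recursion for the truncated orthant in the diamond cubic lattice: for every integer K ≥ 1, the real sequences u_ℓ := (ℓ−K+1)!·(ℓ+K+2)! / ( K^ℓ·(K+1)^ℓ·(2K+1)! ) (defined for ℓ ≥ K−1) and v_ℓ := (2K+1)!·K^ℓ·(K+1)^ℓ / ( (ℓ+1)·(ℓ+2)·(ℓ+K+1)!·(ℓ−K)! ) (defined for ℓ ≥ K) satisfy, for every integer ℓ ≥ K, both (u_{ℓ−1} + u_ℓ)·v_ℓ = 1 and u_ℓ·( v_ℓ + ((ℓ+3)/(ℓ+1))·v_{ℓ+1} ) = 1. -/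

import Mathlib

/-- The sequence `u_ℓ = (ℓ−K+1)!·(ℓ+K+2)! / (K^ℓ·(K+1)^ℓ·(2K+1)!)` (for `ℓ ≥ K−1`),
written with truncated natural subtraction as `(ℓ+1−K)!`. -/
noncomputable def diamondU (K ℓ : ℕ) : ℝ :=
  (Nat.factorial (ℓ + 1 - K) : ℝ) * (Nat.factorial (ℓ + K + 2) : ℝ) /
    ((K : ℝ) ^ ℓ * ((K : ℝ) + 1) ^ ℓ * (Nat.factorial (2 * K + 1) : ℝ))

/-- The sequence `v_ℓ = (2K+1)!·K^ℓ·(K+1)^ℓ / ((ℓ+1)·(ℓ+2)·(ℓ+K+1)!·(ℓ−K)!)`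
(for `ℓ ≥ K`). -/
noncomputable def diamondV (K ℓ : ℕ) : ℝ :=
  (Nat.factorial (2 * K + 1) : ℝ) * (K : ℝ) ^ ℓ * ((K : ℝ) + 1) ^ ℓ /
    (((ℓ : ℝ) + 1) * ((ℓ : ℝ) + 2) * (Nat.factorial (ℓ + K + 1) : ℝ) *
      (Nat.factorial (ℓ - K) : ℝ))

/-!
Each equation says that two products of a `u` and a `v` sum to `1`. The product `u_ℓ v_{ℓ+1}` is
free of factorials, because those of `u_ℓ` are exactly those in the denominator of `v_{ℓ+1}`; with
`t_ℓ = K(K+1) / ((ℓ+1)(ℓ+2))` it equals `t_{ℓ+1}`. In `u_ℓ v_ℓ` only the factors `ℓ+1-K` and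
`ℓ+K+2` survive, and `(ℓ+1-K)(ℓ+K+2) = (ℓ+1)(ℓ+2) - K(K+1)` makes it `1 - t_ℓ`. The weight
`(ℓ+3)/(ℓ+1)` in the second equation is what carries `t_{ℓ+1}` back to `t_ℓ`.
-/

section

variable {K : ℕ}

theorem diamondU_mul_diamondV_succ (hK : K ≠ 0) (ℓ : ℕ) :
    diamondU K ℓ * diamondV K (ℓ + 1) =
      (K : ℝ) * (K + 1) / (((ℓ : ℝ) + 2) * (ℓ + 3)) := by
  have hindex : ℓ + 1 + K + 1 = ℓ + K + 2 := by ring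
  have hV₁ : ((ℓ + 1 : ℕ) : ℝ) + 1 = ℓ + 2 := by push_cast; ring
  have hV₂ : ((ℓ + 1 : ℕ) : ℝ) + 2 = ℓ + 3 := by push_cast; ring
  rw [diamondU, diamondV, hindex, hV₁, hV₂]
  field_simp
  ring

theorem diamondU_mul_diamondV_eq_div (hK : K ≠ 0) {ℓ : ℕ} (hℓ : K ≤ ℓ) :
    diamondU K ℓ * diamondV K ℓ =
      ((ℓ : ℝ) + 1 - K) * (ℓ + K + 2) / (((ℓ : ℝ) + 1) * (ℓ + 2)) := by
  have hU₁ : ((ℓ + 1 - K).factorial : ℝ) = ((ℓ : ℝ) + 1 - K) * (ℓ - K).factorial := by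
    rw [Nat.sub_add_comm hℓ, Nat.factorial_succ]
    push_cast [Nat.cast_sub hℓ]
    ring
  have hU₂ : ((ℓ + K + 2).factorial : ℝ) = ((ℓ : ℝ) + K + 2) * (ℓ + K + 1).factorial := by
    rw [Nat.factorial_succ (ℓ + K + 1)]
    push_cast
    ring
  rw [diamondU, diamondV, hU₁, hU₂]
  field_simp

theorem diamondU_mul_diamondV (hK : K ≠ 0) {ℓ : ℕ} (hℓ : K ≤ ℓ) :
    diamondU K ℓ * diamondV K ℓ =
      1 - (K : ℝ) * (K + 1) / (((ℓ : ℝ) + 1) * (ℓ + 2)) := by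
  rw [diamondU_mul_diamondV_eq_div hK hℓ]
  field_simp
  ring

theorem diamondU_pred_mul_diamondV (hK : K ≠ 0) {ℓ : ℕ} (hℓ : ℓ ≠ 0) :
    diamondU K (ℓ - 1) * diamondV K ℓ =
      (K : ℝ) * (K + 1) / (((ℓ : ℝ) + 1) * (ℓ + 2)) := by
  obtain ⟨m, rfl⟩ := Nat.exists_eq_succ_of_ne_zero hℓ
  convert diamondU_mul_diamondV_succ hK m using 3 <;> push_cast <;> ring

theorem diamondU_mul_div_mul_diamondV_succ (hK : K ≠ 0) (ℓ : ℕ) :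
    diamondU K ℓ * (((ℓ : ℝ) + 3) / (ℓ + 1) * diamondV K (ℓ + 1)) =
      (K : ℝ) * (K + 1) / (((ℓ : ℝ) + 1) * (ℓ + 2)) := by
  rw [mul_left_comm, diamondU_mul_diamondV_succ hK]
  field_simp

end

/-- Critical gauge recursion for the truncated orthant in the diamond cubic lattice:
for every `K ≥ 1` and every `ℓ ≥ K`, both `(u_{ℓ−1} + u_ℓ)·v_ℓ = 1` and
`u_ℓ·(v_ℓ + ((ℓ+3)/(ℓ+1))·v_{ℓ+1}) = 1`. -/
theorem diamond_cubic_gauge_recursion (K : ℕ) (hK : 1 ≤ K) :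
    ∀ ℓ : ℕ, K ≤ ℓ →
      (diamondU K (ℓ - 1) + diamondU K ℓ) * diamondV K ℓ = 1 ∧
      diamondU K ℓ *
          (diamondV K ℓ + (((ℓ : ℝ) + 3) / ((ℓ : ℝ) + 1)) * diamondV K (ℓ + 1)) = 1 := by
  intro ℓ hℓ
  have hK₀ : K ≠ 0 := Nat.one_le_iff_ne_zero.mp hK
  have hℓ₀ : ℓ ≠ 0 := Nat.one_le_iff_ne_zero.mp (hK.trans hℓ)
  constructor
  · rw [add_mul, diamondU_pred_mul_diamondV hK₀ hℓ₀, diamondU_mul_diamondV hK₀ hℓ,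
      add_sub_cancel]
  · rw [mul_add, diamondU_mul_div_mul_diamondV_succ hK₀, diamondU_mul_diamondV hK₀ hℓ,
      sub_add_cancel]
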